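/- arXiv:1108.4400 — 2 statements merged into one kernel-verified Lean document; each statement's English description precedes it below -/
import Mathlib

section
/- Let (f_n) be a sequence of measurable real-valued functions on a measure space (X, B, μ). If (f_n) converges AUM, then (f_n) converges pointwise almost everywhere, i.e., for almost every x the sequence (f_n(x)) is Cauchy. -/
open MeasureTheory

/-!
If the points that oscillate by at least `ε` along every tail had measure greater than some `c > 0`,
then continuity from below would let us choose, one `m` after another, a bound `F m` such that the
points oscillating by `ε` within every one of the windows `[0, F 0], …, [M, F M]` still have measure
greater than `c`, for all `M` at once. This `F` contradicts metastability with `λ = c`. Asking for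
measure greater than `c`, instead of a small loss at each step, is what handles infinite measures.
-/

section

open Set Filter

variable {X E ι : Type*}

section Measure

variable [MeasurableSpace X] {μ : Measure X} [Preorder ι] [IsDirectedOrder ι]
  [(atTop : Filter ι).IsCountablyGenerated]

theorem exists_lt_measure_inter_of_monotone {B : ι → Set X} (hB : Monotone B) {S : Set X}
    (hS : S ⊆ ⋃ k, B k) {c : ENNReal} (hc : c < μ S) : ∃ k, c < μ (S ∩ B k) := by
  have hmono : Monotone fun k => S ∩ B k := fun _ _ hkl => inter_subset_inter_right S (hB hkl)
  rwa [← inter_eq_left.mpr hS, inter_iUnion, hmono.measure_iUnion, lt_iSup_iff] at hc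

theorem exists_forall_lt_measure_of_monotone {B : ℕ → ι → Set X} (hB : ∀ m, Monotone (B m))
    {c : ENNReal} (hc : c < μ (⋂ m, ⋃ k, B m k)) :
    ∃ F : ℕ → ι, ∀ M, c < μ {x | ∀ m ≤ M, x ∈ B m (F m)} := by
  let Large := {S : Set X // S ⊆ ⋂ m, ⋃ k, B m k ∧ c < μ S}
  have hstep (m : ℕ) (S : Large) : ∃ k, c < μ (S.1 ∩ B m k) :=
    exists_lt_measure_inter_of_monotone (hB m) (S.2.1.trans (iInter_subset _ m)) S.2.2
  choose k hk using hstep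
  let S : ℕ → Large := fun m => Nat.rec ⟨_, Subset.rfl, hc⟩
    (fun m S => ⟨S.1 ∩ B m (k m S), inter_subset_left.trans S.2.1, hk m S⟩) m
  have hanti : Antitone fun m => (S m).1 := antitone_nat_of_succ_le fun _ => inter_subset_left
  have hsub (m : ℕ) : (S (m + 1)).1 ⊆ B m (k m (S m)) := inter_subset_right
  exact ⟨fun m => k m (S m), fun M => (S (M + 1)).2.2.trans_le <|
    measure_mono fun _ hx m hm => hsub m (hanti (Nat.succ_le_succ hm) hx)⟩

end Measure

variable [PseudoMetricSpace E]

/-- The set of points at which the family `f` oscillates by at least `ε` on the index set `s`. -/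
def oscillationSet (f : ι → X → E) (ε : ℝ) (s : Set ι) : Set X :=
  {x | ∃ n ∈ s, ∃ n' ∈ s, ε ≤ dist (f n x) (f n' x)}

theorem oscillationSet_mono (f : ι → X → E) (ε : ℝ) : Monotone (oscillationSet f ε) :=
  fun _ _ hst _ ⟨n, hn, n', hn', h⟩ => ⟨n, hst hn, n', hst hn', h⟩

theorem oscillationSet_Ici [SemilatticeSup ι] (f : ι → X → E) (ε : ℝ) (m : ι) :
    oscillationSet f ε (Ici m) = ⋃ k, oscillationSet f ε (Icc m k) := by
  refine Subset.antisymm ?_ (iUnion_subset fun _ => oscillationSet_mono f ε Icc_subset_Ici_self)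
  rintro x ⟨n, hn, n', hn', h⟩
  exact mem_iUnion.mpr ⟨n ⊔ n', n, ⟨hn, le_sup_left⟩, n', ⟨hn', le_sup_right⟩, h⟩

theorem cauchySeq_of_forall_notMem_oscillationSet [SemilatticeSup ι] [Nonempty ι]
    {f : ι → X → E} {x : X}
    (h : ∀ j : ℕ, x ∉ ⋂ m, oscillationSet f (1 / ((j : ℝ) + 1)) (Ici m)) :
    CauchySeq fun n => f n x := by
  rw [Metric.cauchySeq_iff]
  intro ε hε
  obtain ⟨j, hj⟩ := exists_nat_one_div_lt hε
  obtain ⟨m, hm⟩ : ∃ m, x ∉ oscillationSet f (1 / ((j : ℝ) + 1)) (Ici m) := by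
    simpa only [mem_iInter, not_forall] using h j
  exact ⟨m, fun n hn n' hn' =>
    (lt_of_not_ge fun hle => hm ⟨n, hn, n', hn', hle⟩).trans hj⟩

variable [MeasurableSpace X]

/-- Almost uniform metastable pointwise convergence of `f` with respect to `μ`, for arbitrary
functions with values in a pseudometric space; `μ` of a non-measurable set is its outer measure. -/
def AUMConvergent (μ : Measure X) (f : ℕ → X → E) : Prop :=
  ∀ lam : ℝ, 0 < lam → ∀ ε : ℝ, 0 < ε → ∀ F : ℕ → ℕ, ∃ M : ℕ,
    μ {x | ∀ m ≤ M, x ∈ oscillationSet f ε (Icc m (F m))} < ENNReal.ofReal lam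

variable {μ : Measure X} {f : ℕ → X → E}

theorem AUMConvergent.measure_iInter_oscillationSet_Ici (hf : AUMConvergent μ f) {ε : ℝ}
    (hε : 0 < ε) : μ (⋂ m, oscillationSet f ε (Ici m)) = 0 := by
  by_contra hne
  obtain ⟨c, hc_pos, hc⟩ := exists_between (pos_iff_ne_zero.mpr hne)
  have hc_top : c ≠ ⊤ := hc.ne_top
  simp only [oscillationSet_Ici] at hc
  have hmono (m : ℕ) : Monotone fun k => oscillationSet f ε (Icc m k) :=
    fun _ _ hkl => oscillationSet_mono f ε (Icc_subset_Icc_right hkl)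
  obtain ⟨F, hF⟩ := exists_forall_lt_measure_of_monotone hmono hc
  obtain ⟨M, hM⟩ := hf c.toReal (ENNReal.toReal_pos hc_pos.ne' hc_top) ε hε F
  rw [ENNReal.ofReal_toReal hc_top] at hM
  exact lt_asymm hM (hF M)

theorem stmt_14_general (hf : AUMConvergent μ f) : ∀ᵐ x ∂μ, CauchySeq fun n => f n x := by
  have hnull : ∀ᵐ x ∂μ, ∀ j : ℕ, x ∉ ⋂ m, oscillationSet f (1 / ((j : ℝ) + 1)) (Ici m) :=
    ae_all_iff.mpr fun _ =>
      measure_eq_zero_iff_ae_notMem.mp (hf.measure_iInter_oscillationSet_Ici (by positivity))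
  exact hnull.mono fun _ => cauchySeq_of_forall_notMem_oscillationSet

end

theorem stmt_14 {X : Type*} [MeasurableSpace X] (μ : Measure X)
    (f : ℕ → X → ℝ) (hf : ∀ n, Measurable (f n))
    (hAUM : ∀ lam : ℝ, 0 < lam → ∀ ε : ℝ, 0 < ε → ∀ F : ℕ → ℕ, ∃ M : ℕ,
      μ {x | ∀ m ≤ M, ∃ n ∈ Set.Icc m (F m), ∃ n' ∈ Set.Icc m (F m),
          ε ≤ |f n x - f n' x|} < ENNReal.ofReal lam) :
    ∀ᵐ x ∂μ, CauchySeq (fun n => f n x) :=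
  stmt_14_general hAUM
end

section
/- On ℝ with Lebesgue measure, the sequence f_n = χ_{[n, n+1]} (the indicator function of the closed interval [n, n+1]) converges AUM but does not converge almost uniformly. -/
open MeasureTheory

open Set Filter Function
open scoped Topology

/-!
An almost uniformly convergent sequence is Cauchy in measure, so indicators of almost disjoint sets
can converge almost uniformly only if the measures of the sets tend to `0`. In contrast, a point at
which metastability fails both on `[0, F 0]` and on `[M, F M]` lies in a set of index at most `F 0`
and in one of index at least `M`; for large `M` almost no point does.
-/

section General

variable {α E : Type*} [MeasurableSpace α] [PseudoMetricSpace E] {μ : Measure α} {f : ℕ → α → E}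

/-- AUM convergence (almost uniform metastable pointwise convergence): outside a set of measure
less than `δ`, one of the windows `[m, F m]` with `m ≤ M` has `ε`-small oscillation, where `M` does
not depend on the point. The exceptional set is not required to be measurable, so `μ` is applied to
it as an outer measure. -/
def ConvergesAUM (μ : Measure α) (f : ℕ → α → E) : Prop :=
  ∀ δ : ℝ, 0 < δ → ∀ ε : ℝ, 0 < ε → ∀ F : ℕ → ℕ, ∃ M : ℕ,
    μ {x | ∀ m ≤ M, ∃ n ∈ Icc m (F m), ∃ n' ∈ Icc m (F m), ε ≤ dist (f n x) (f n' x)}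
      < ENNReal.ofReal δ

/-- Almost uniform convergence, in its Cauchy form: the sequence is uniformly Cauchy off measurable
sets of arbitrarily small measure. No limit function is mentioned. -/
def ConvergesAlmostUniformly (μ : Measure α) (f : ℕ → α → E) : Prop :=
  ∀ δ : ℝ, 0 < δ → ∃ A : Set α, MeasurableSet A ∧ μ A ≤ ENNReal.ofReal δ ∧
    UniformCauchySeqOn f atTop Aᶜ

theorem convergesAlmostUniformly_iff :
    ConvergesAlmostUniformly μ f ↔
      ∀ δ : ℝ, 0 < δ → ∃ A : Set α, MeasurableSet A ∧ μ A ≤ ENNReal.ofReal δ ∧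
        ∀ ε : ℝ, 0 < ε → ∃ m : ℕ, ∀ n n' : ℕ, m ≤ n → m ≤ n' →
          ∀ x ∈ Aᶜ, dist (f n x) (f n' x) < ε := by
  simp only [ConvergesAlmostUniformly, Metric.uniformCauchySeqOn_iff]
  exact forall₂_congr fun _ _ ↦ exists_congr fun _ ↦ and_congr_right' <| and_congr_right' <|
    forall₂_congr fun _ _ ↦ exists_congr fun _ ↦ forall_congr' fun _ ↦ forall_comm

theorem convergesAUM_of_eventually_aedisjoint_support [Zero E]
    (hf : ∀ n, ∀ᶠ k in atTop, AEDisjoint μ (support (f n)) (support (f k))) :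
    ConvergesAUM μ f := by
  intro δ hδ ε hε F
  obtain ⟨M, hM⟩ : ∃ M, ∀ k ≥ M, ∀ n ∈ Iic (F 0), AEDisjoint μ (support (f n)) (support (f k)) :=
    eventually_atTop.1 ((eventually_all_finite (finite_Iic (F 0))).2 fun n _ ↦ hf n)
  have exists_mem_support {x : α} {m : ℕ}
      (hx : ∃ n ∈ Icc m (F m), ∃ n' ∈ Icc m (F m), ε ≤ dist (f n x) (f n' x)) :
      ∃ n ∈ Icc m (F m), x ∈ support (f n) := by
    by_contra! hzero
    obtain ⟨n, hn, n', hn', hε'⟩ := hx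
    rw [notMem_support.1 (hzero n hn), notMem_support.1 (hzero n' hn'), dist_self] at hε'
    exact hε.not_ge hε'
  have null : μ (⋃ k ∈ Ici M, ⋃ n ∈ Iic (F 0), support (f n) ∩ support (f k)) = 0 := by
    simp only [measure_biUnion_null_iff (to_countable _)]
    exact hM
  refine ⟨M, (measure_mono_null (fun x hx ↦ ?_) null).trans_lt (ENNReal.ofReal_pos.2 hδ)⟩
  obtain ⟨n, hn, hxn⟩ := exists_mem_support (hx 0 M.zero_le)
  obtain ⟨k, hk, hxk⟩ := exists_mem_support (hx M le_rfl)
  exact mem_biUnion hk.1 (mem_biUnion hn.2 ⟨hxn, hxk⟩)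

theorem ConvergesAlmostUniformly.tendsto_measure_le_dist (hf : ConvergesAlmostUniformly μ f)
    {ε : ℝ} (hε : 0 < ε) :
    Tendsto (fun p : ℕ × ℕ ↦ μ {x | ε ≤ dist (f p.1 x) (f p.2 x)}) (atTop ×ˢ atTop) (𝓝 0) := by
  refine ENNReal.tendsto_nhds_zero.2 fun δ hδ ↦ ?_
  obtain ⟨r, hr, hrδ⟩ := ENNReal.lt_iff_exists_nnreal_btwn.1 hδ
  obtain ⟨A, -, hA, hcauchy⟩ := hf r (by exact_mod_cast hr)
  rw [ENNReal.ofReal_coe_nnreal] at hA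
  filter_upwards [hcauchy _ (Metric.dist_mem_uniformity hε)] with p hp
  have hsub : {x | ε ≤ dist (f p.1 x) (f p.2 x)} ⊆ A := fun x hx ↦
    by_contra fun hxA ↦ (hp x hxA).not_ge hx
  exact (measure_mono hsub).trans (hA.trans hrδ.le)

end General

section Indicator

variable {α : Type*}

theorem one_le_dist_indicator_one_of_mem_diff {s t : Set α} {x : α} (hx : x ∈ s \ t) :
    1 ≤ dist (s.indicator (1 : α → ℝ) x) (t.indicator 1 x) := by
  simp [hx.1, hx.2]

variable [MeasurableSpace α] {μ : Measure α} {s : ℕ → Set α}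

theorem ConvergesAlmostUniformly.tendsto_measure_of_indicator_one
    (h : ConvergesAlmostUniformly μ fun n ↦ (s n).indicator (1 : α → ℝ))
    (hs : ∀ n, ∀ᶠ k in atTop, AEDisjoint μ (s n) (s k)) :
    Tendsto (fun n ↦ μ (s n)) atTop (𝓝 0) := by
  refine ENNReal.tendsto_nhds_zero.2 fun δ hδ ↦ ?_
  have hcauchy := ENNReal.tendsto_nhds_zero.1 (h.tendsto_measure_le_dist one_pos) δ hδ
  filter_upwards [hcauchy.curry] with n hn
  obtain ⟨k, hk, hdisj⟩ := (hn.and (hs n)).exists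
  calc
    μ (s n) = μ (s n \ s k) := hdisj.measure_sdiff_left.symm
    _ ≤ μ {x | 1 ≤ dist ((s n).indicator (1 : α → ℝ) x) ((s k).indicator 1 x)} :=
      measure_mono fun _ ↦ one_le_dist_indicator_one_of_mem_diff
    _ ≤ δ := hk

theorem stmt_17_general (hs : ∀ n, ∀ᶠ k in atTop, AEDisjoint μ (s n) (s k))
    (hμ : ¬ Tendsto (fun n ↦ μ (s n)) atTop (𝓝 0)) :
    ConvergesAUM μ (fun n ↦ (s n).indicator (1 : α → ℝ)) ∧
      ¬ ConvergesAlmostUniformly μ (fun n ↦ (s n).indicator (1 : α → ℝ)) := by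
  refine ⟨convergesAUM_of_eventually_aedisjoint_support ?_,
    fun h ↦ hμ (h.tendsto_measure_of_indicator_one hs)⟩
  simpa [support_indicator] using hs

end Indicator

theorem eventually_disjoint_Icc_natCast_add_one (n : ℕ) :
    ∀ᶠ k : ℕ in atTop, Disjoint (Icc (n : ℝ) (n + 1)) (Icc (k : ℝ) (k + 1)) := by
  filter_upwards [eventually_gt_atTop (n + 1)] with k hk
  refine disjoint_left.2 fun x hxn hxk ↦ ?_
  have : (n : ℝ) + 1 < k := mod_cast hk
  exact (hxn.2.trans_lt this).not_ge hxk.1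

theorem not_tendsto_volume_Icc_natCast_add_one :
    ¬ Tendsto (fun n : ℕ ↦ volume (Icc (n : ℝ) (n + 1))) atTop (𝓝 0) := by
  simp [tendsto_const_nhds_iff]

theorem stmt_17 :
    (∀ lam : ℝ, 0 < lam → ∀ ε : ℝ, 0 < ε → ∀ F : ℕ → ℕ, ∃ M : ℕ,
      volume {x : ℝ | ∀ m ≤ M, ∃ n ∈ Set.Icc m (F m), ∃ n' ∈ Set.Icc m (F m),
          ε ≤ |(Set.Icc (n : ℝ) (n + 1)).indicator 1 x -
                (Set.Icc (n' : ℝ) (n' + 1)).indicator 1 x|} < ENNReal.ofReal lam) ∧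
    ¬ (∀ lam : ℝ, 0 < lam → ∃ A : Set ℝ, MeasurableSet A ∧
        volume A ≤ ENNReal.ofReal lam ∧
        ∀ ε : ℝ, 0 < ε → ∃ m : ℕ, ∀ n n' : ℕ, m ≤ n → m ≤ n' →
          ∀ x ∈ Aᶜ, |(Set.Icc (n : ℝ) (n + 1)).indicator 1 x -
                      (Set.Icc (n' : ℝ) (n' + 1)).indicator 1 x| < ε) := by
  obtain ⟨haum, hnot⟩ := stmt_17_general
    (fun n ↦ (eventually_disjoint_Icc_natCast_add_one n).mono fun _ ↦ Disjoint.aedisjoint)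
    not_tendsto_volume_Icc_natCast_add_one
  exact ⟨haum, fun h ↦ hnot (convergesAlmostUniformly_iff.2 h)⟩
end
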